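/- For every integer n ≥ 6, the averaged-prime analogue of the Nicholson conjecture holds: (p̄_{n+1} / p̄_n)^n < (n/2)·ln(n/2). -/

import Mathlib

open Finset Real

/-- `nthPrime n` is the n-th prime number with 1-based indexing:
`nthPrime 1 = 2`, `nthPrime 2 = 3`, `nthPrime 3 = 5`, ... -/
noncomputable def nthPrime (n : ℕ) : ℕ := Nat.nth Nat.Prime (n - 1)

/-- The arithmetic average of the first `n` primes. -/
noncomputable def avgPrime (n : ℕ) : ℝ := (1 / (n : ℝ)) * ∑ i ∈ Finset.Icc 1 n, (nthPrime i : ℝ)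

/-- The gap in the averaged primes. -/
noncomputable def avgGap (n : ℕ) : ℝ := avgPrime (n + 1) - avgPrime n

/-- The averaged-prime counting function `π̄(x) = #{i ≥ 1 : p̄_i ≤ x}`. -/
noncomputable def avgPrimeCount (x : ℝ) : ℕ := Nat.card {i : ℕ | 1 ≤ i ∧ avgPrime i ≤ x}

/-- The ordinary prime counting function for a real argument. -/
noncomputable def primeCount (x : ℝ) : ℕ := Nat.card {q : ℕ | q.Prime ∧ (q : ℝ) ≤ x}

/-!
Let `S` be the sum of the first `n` primes and `q` the next prime. The ratio of consecutive averages
is `n (S + q) / ((n + 1) S) = 1 + (n q / S - 1) / (n + 1)`, so its `n`-th power is at most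
`exp (n q / S - 1)`, and it suffices to bound `n q / S`. Sieving by `30` shows that primes have
density at most `2 / 7`, whence `S` grows at least like `(7 / 4) n ^ 2`, while Chebyshev's bound
`ψ x ≥ x log 2 - log (x + 1)` gives `q ≤ n (8 / 5 log n + 3)` for `n ≥ 128`. Together,
`n q / S ≤ log n + 5 / 3`, which beats the target. For `20 ≤ n < 128` the linear bound
`q ≤ 7 n - 29` replaces Chebyshev's. The cases `8 ≤ n < 20` are checked numerically in the form
`n q / S ≤ 8 / 3`; for `n = 6` the exponential bound is too weak and the power is computed exactly,
as it is for `n = 7`.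
-/

open scoped Nat.Prime

/-- The sum of the first `n` primes. As `Nat.nth` is indexed from zero, the next prime is
`Nat.nth Nat.Prime n`. -/
noncomputable def primeSum (n : ℕ) : ℕ := ∑ i ∈ range n, Nat.nth Nat.Prime i

/-- The Nicholson inequality for averaged primes at the index `n`. -/
def AvgNicholson (n : ℕ) : Prop :=
  (avgPrime (n + 1) / avgPrime n) ^ n < ((n : ℝ) / 2) * Real.log ((n : ℝ) / 2)

lemma primeSum_succ (n : ℕ) : primeSum (n + 1) = primeSum n + Nat.nth Nat.Prime n :=
  sum_range_succ _ n

lemma primeSum_pos {n : ℕ} (hn : n ≠ 0) : 0 < primeSum n :=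
  sum_pos (fun i _ ↦ (Nat.prime_nth_prime i).pos) (nonempty_range_iff.mpr hn)

lemma avgPrime_eq_primeSum_div (n : ℕ) : avgPrime n = primeSum n / n := by
  rw [avgPrime, primeSum, ← Ico_add_one_right_eq_Icc, sum_Ico_eq_sum_range, one_div_mul_eq_div]
  simp [nthPrime]

lemma primeSum_primeCounting' (m : ℕ) : primeSum (π' m) = ∑ p ∈ m.primesBelow, p := by
  induction m with
  | zero => rfl
  | succ m ih =>
    rw [Nat.primesBelow_succ, Nat.primeCounting', Nat.count_succ]
    split_ifs with hm
    · have hnotMem : m ∉ m.primesBelow := fun h ↦ (Nat.lt_of_mem_primesBelow h).false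
      rw [primeSum_succ, sum_insert hnotMem, Nat.nth_count hm, add_comm]
      exact congrArg (m + ·) ih
    · exact ih

lemma primeSum_eq_sum_primesBelow {m n : ℕ} (h : π' m = n) :
    primeSum n = ∑ p ∈ m.primesBelow, p :=
  h ▸ primeSum_primeCounting' m

lemma avg_succ_div_avg_pow_le_exp {S a c : ℝ} (n : ℕ) (hS : 0 < S) (ha : 0 ≤ a) (hc : 0 ≤ c)
    (h : n * a ≤ (1 + c) * S) : ((S + a) / (n + 1) / (S / n)) ^ n ≤ exp c := by
  rcases n.eq_zero_or_pos with rfl | hn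
  · simpa using hc
  have hbase : (S + a) / (n + 1) / (S / n) ≤ 1 - -c / n :=
    calc (S + a) / (n + 1) / (S / n) = (n * S + n * a) / (S * (n + 1)) := by field_simp
      _ ≤ (n * S + (1 + c) * S) / (S * (n + 1)) := by gcongr
      _ = 1 + c / (n + 1) := by field_simp; ring
      _ ≤ 1 + c / n := by gcongr; linarith
      _ = 1 - -c / n := by ring
  calc ((S + a) / (n + 1) / (S / n)) ^ n ≤ (1 - -c / n) ^ n := by gcongr
    _ ≤ exp (- -c) := one_sub_div_pow_le_exp_neg (by linarith [Nat.cast_nonneg (α := ℝ) n])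
    _ = exp c := by rw [neg_neg]

lemma avgNicholson_of_mul_nth_prime_le {n : ℕ} {c : ℝ} (hn : n ≠ 0) (hc : 0 ≤ c)
    (h : n * Nat.nth Nat.Prime n ≤ (1 + c) * primeSum n)
    (hexp : exp c < (n : ℝ) / 2 * log ((n : ℝ) / 2)) : AvgNicholson n := by
  have hpow := avg_succ_div_avg_pow_le_exp n (mod_cast primeSum_pos hn) (Nat.cast_nonneg _) hc h
  rw [AvgNicholson, avgPrime_eq_primeSum_div, avgPrime_eq_primeSum_div, primeSum_succ]
  push_cast
  exact hpow.trans_lt hexp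

lemma mul_log_le_mul_log {x y : ℝ} (hx : 1 ≤ x) (hxy : x ≤ y) : x * log x ≤ y * log y := by
  have hlog : 0 ≤ log x := log_nonneg hx
  have hy : 0 ≤ y := by linarith
  gcongr

lemma exp_div_lt_of_pow_lt_pow {k m : ℕ} {b : ℝ} (hm : m ≠ 0) (hb : 0 ≤ b)
    (h : (2.7182818286 : ℝ) ^ k < b ^ m) : exp (k / m) < b := by
  refine lt_of_pow_lt_pow_left₀ m hb ?_
  calc exp (k / m) ^ m = exp 1 ^ k := by
        rw [← exp_nat_mul, ← exp_nat_mul]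
        field_simp
    _ ≤ 2.7182818286 ^ k := by gcongr; exact exp_one_lt_d9.le
    _ < b ^ m := h

lemma primeCounting'_add_28_le {k : ℕ} (hk : 30 < k) : π' (k + 28) ≤ π' k + 8 := by
  have htotient : Nat.totient 30 = 8 := by decide
  have hsieve := Nat.primeCounting'_add_le (a := 30) (k := k) (by norm_num) hk 28
  rwa [htotient] at hsieve

lemma seven_mul_primeCounting'_le_of_lt : ∀ m < 59, 7 * π' m ≤ 2 * m + 16 := by
  decide +kernel

lemma seven_mul_primeCounting'_le (m : ℕ) : 7 * π' m ≤ 2 * m + 16 := by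
  induction m using Nat.strong_induction_on with
  | _ m ih =>
    rcases lt_or_ge m 59 with hm | hm
    · exact seven_mul_primeCounting'_le_of_lt m hm
    · obtain ⟨k, rfl⟩ := Nat.exists_eq_add_of_le' (show 28 ≤ m by omega)
      have hk := ih k (by omega)
      have hstep := primeCounting'_add_28_le (k := k) (by omega)
      omega

lemma seven_mul_le_nth_prime (n : ℕ) : 7 * n ≤ 2 * Nat.nth Nat.Prime n + 11 := by
  have h := seven_mul_primeCounting'_le (Nat.nth Nat.Prime n + 1)
  rw [Nat.primeCounting', Nat.count_nth_succ_of_infinite Nat.infinite_setOfPred_prime] at h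
  omega

lemma seven_mul_sq_le_primeSum (n : ℕ) : 7 * n ^ 2 ≤ 4 * primeSum n + 29 * n := by
  induction n with
  | zero => simp
  | succ n ih =>
    rw [primeSum_succ]
    linarith [seven_mul_le_nth_prime n]

lemma nth_prime_sub_one_mul_log_two_le (n : ℕ) :
    (Nat.nth Nat.Prime n - 1) * log 2 ≤ (n + 1) * log (Nat.nth Nat.Prime n) := by
  have hq : 1 < Nat.nth Nat.Prime n := (Nat.prime_nth_prime n).one_lt
  have hlower := Chebyshev.psi_ge (Nat.nth Nat.Prime n - 1)
  have hupper := Chebyshev.psi_le_primeCounting_mul_log (Nat.nth Nat.Prime n - 1)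
  rw [Nat.primeCounting_sub_one, Nat.primeCounting'_nth_eq] at hupper
  push_cast [hq.le] at hlower hupper
  rw [sub_add_cancel] at hlower
  have hq' : (1 : ℝ) < Nat.nth Nat.Prime n := mod_cast hq
  have hlog : (n : ℝ) * log (Nat.nth Nat.Prime n - 1) ≤ n * log (Nat.nth Nat.Prime n) := by
    gcongr
    linarith
  linarith

lemma log_le_log_add_div_sub_one {x y : ℝ} (hx : 0 < x) (hy : 0 < y) :
    log x ≤ log y + x / y - 1 := by
  have h := log_le_sub_one_of_pos (div_pos hx hy)
  rw [log_div hx.ne' hy.ne'] at h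
  linarith

lemma nth_prime_le_mul_log {n : ℕ} (hn : 128 ≤ n) :
    (Nat.nth Nat.Prime n : ℝ) ≤ n * (8 / 5 * log n + 3) := by
  have hchebyshev := nth_prime_sub_one_mul_log_two_le n
  have hq : (0 : ℝ) < Nat.nth Nat.Prime n := mod_cast (Nat.prime_nth_prime n).pos
  set q : ℝ := (Nat.nth Nat.Prime n : ℝ)
  have hn' : (128 : ℝ) ≤ n := mod_cast hn
  have hlog2 := log_two_gt_d9
  have hlog2' := log_two_lt_d9
  -- The tangent at `16 n` is nearly optimal among the powers of two times `n`.
  have htangent : log q ≤ log n + 4 * log 2 + q / (n * 16) - 1 := by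
    have h := log_le_log_add_div_sub_one hq (show (0 : ℝ) < n * 2 ^ 4 by positivity)
    rw [log_mul (by positivity) (by positivity), log_pow] at h
    norm_num at h ⊢
    exact h
  have hbound : (q - 1) * log 2 ≤ 129 / 128 * (n * (log n + 1.7726) + q / 16) :=
    calc (q - 1) * log 2 ≤ (n + 1) * log q := hchebyshev
      _ ≤ (n + 1) * (log n + 1.7726 + q / (n * 16)) := by gcongr; linarith
      _ ≤ (129 / 128 * n) * (log n + 1.7726 + q / (n * 16)) := by gcongr; linarith
      _ = 129 / 128 * (n * (log n + 1.7726) + q / 16) := by field_simp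
  have hqlog : q * 0.69314718 ≤ q * log 2 := by gcongr; linarith
  have hnlog : 0 ≤ n * log n := by positivity
  linarith

lemma five_mul_sq_le_primeSum {n : ℕ} (hn : 87 ≤ n) : 5 * n ^ 2 ≤ 3 * primeSum n := by
  nlinarith [seven_mul_sq_le_primeSum n]

lemma avgNicholson_of_128_le {n : ℕ} (hn : 128 ≤ n) : AvgNicholson n := by
  have hn' : (128 : ℝ) ≤ n := mod_cast hn
  have hlog2 := log_two_gt_d9
  have hlog64 : log 64 ≤ log (n / 2) := log_le_log (by norm_num) (by linarith)
  have hlog64_eq : log 64 = 6 * log 2 := by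
    rw [show (64 : ℝ) = 2 ^ 6 by norm_num, log_pow, Nat.cast_ofNat]
  have hlogn : log (n / 2) ≤ log n := log_le_log (by linarith) (by linarith)
  have hsum : 5 / 3 * (n : ℝ) ^ 2 ≤ primeSum n := by
    have : (5 * n ^ 2 : ℝ) ≤ 3 * primeSum n := mod_cast five_mul_sq_le_primeSum (by omega)
    linarith
  refine avgNicholson_of_mul_nth_prime_le (c := log n + 2 / 3) (by omega) (by linarith) ?_ ?_
  · calc (n : ℝ) * Nat.nth Nat.Prime n ≤ n * (n * (8 / 5 * log n + 3)) := by
          gcongr; exact nth_prime_le_mul_log hn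
      _ = n ^ 2 * (8 / 5 * log n + 3) := by ring
      _ ≤ n ^ 2 * (5 / 3 * (1 + (log n + 2 / 3))) := by gcongr; linarith
      _ = (1 + (log n + 2 / 3)) * (5 / 3 * n ^ 2) := by ring
      _ ≤ (1 + (log n + 2 / 3)) * primeSum n := by gcongr
  · have hexp : exp (2 / 3) < 2 :=
      mod_cast exp_div_lt_of_pow_lt_pow (k := 2) (m := 3) (b := 2) (by norm_num) (by norm_num)
        (by norm_num)
    calc exp (log n + 2 / 3) = n * exp (2 / 3) := by rw [exp_add, exp_log (by linarith)]
      _ < n * 2 := by gcongr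
      _ = n / 2 * 4 := by ring
      _ ≤ n / 2 * log (n / 2) := by gcongr; linarith

lemma nth_prime_add_le_of_lt_count {a n : ℕ} (han : a ≤ n)
    (hn : n < Nat.count Nat.Prime (7 * a - 28)) : Nat.nth Nat.Prime n + 29 ≤ 7 * n := by
  have := Nat.nth_lt_of_lt_count hn
  omega

-- A case starting at `n = a` covers all `n` up to the number of primes below `7 * a - 28`, where
-- the next case starts.
set_option maxRecDepth 10000 in
lemma nth_prime_add_le {n : ℕ} (hn : 20 ≤ n) (hn' : n < 128) :
    Nat.nth Nat.Prime n + 29 ≤ 7 * n := by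
  have hstep {a b : ℕ} (hb : Nat.count Nat.Prime (7 * a - 28) = b) (han : a ≤ n) (hnb : n < b) :=
    nth_prime_add_le_of_lt_count han (hnb.trans_eq hb.symm)
  rcases lt_or_ge n 29 with h | h29
  · exact hstep (a := 20) (by norm_num [Nat.count_succ]) hn h
  rcases lt_or_ge n 40 with h | h40
  · exact hstep (by norm_num [Nat.count_succ]) h29 h
  rcases lt_or_ge n 54 with h | h54
  · exact hstep (by norm_num [Nat.count_succ]) h40 h
  rcases lt_or_ge n 70 with h | h70
  · exact hstep (by norm_num [Nat.count_succ]) h54 h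
  rcases lt_or_ge n 89 with h | h89
  · exact hstep (by norm_num [Nat.count_succ]) h70 h
  rcases lt_or_ge n 108 with h | h108
  · exact hstep (by norm_num [Nat.count_succ]) h89 h
  · exact hstep (b := 129) (by norm_num [Nat.count_succ]) h108 (by omega)

lemma avgNicholson_of_20_le_of_lt_128 {n : ℕ} (hn : 20 ≤ n) (hn' : n < 128) :
    AvgNicholson n := by
  refine avgNicholson_of_mul_nth_prime_le (c := 3) (by omega) (by norm_num) ?_ ?_
  · have hnat : n * Nat.nth Nat.Prime n ≤ 4 * primeSum n := by
      nlinarith [nth_prime_add_le hn hn', seven_mul_sq_le_primeSum n]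
    have : (n * Nat.nth Nat.Prime n : ℝ) ≤ 4 * primeSum n := mod_cast hnat
    linarith
  · have hexp : exp 3 < 20.2 := by
      simpa using exp_div_lt_of_pow_lt_pow (k := 3) (m := 1) (b := 20.2) (by norm_num)
        (by norm_num) (by norm_num)
    have hlog10 : 3 * log 2 ≤ log 10 := by
      rw [← log_rpow (by norm_num)]
      exact log_le_log (by norm_num) (by norm_num)
    have hn'' : (20 : ℝ) ≤ n := mod_cast hn
    calc exp 3 < 10 * log 10 := by linarith [log_two_gt_d9]
      _ ≤ n / 2 * log (n / 2) := mul_log_le_mul_log (by norm_num) (by linarith)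

lemma three_mul_mul_nth_prime_le {n : ℕ} (hn : 8 ≤ n) (hn' : n < 20) :
    3 * (n * Nat.nth Nat.Prime n) ≤ 8 * primeSum n := by
  have hcheck : ∀ q < 72, q.Prime → 8 ≤ #q.primesBelow →
      3 * (#q.primesBelow * q) ≤ 8 * ∑ p ∈ q.primesBelow, p := by decide +kernel
  have hq : Nat.nth Nat.Prime n < 72 :=
    Nat.nth_lt_of_lt_count (hn'.trans_eq (by decide +kernel))
  have h := hcheck _ hq (Nat.prime_nth_prime n)
  rw [Nat.primesBelow_card_eq_primeCounting', ← primeSum_primeCounting',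
    Nat.primeCounting'_nth_eq] at h
  exact h hn

lemma avgNicholson_of_8_le_of_lt_20 {n : ℕ} (hn : 8 ≤ n) (hn' : n < 20) : AvgNicholson n := by
  refine avgNicholson_of_mul_nth_prime_le (c := 5 / 3) (by omega) (by norm_num) ?_ ?_
  · have : (3 * (n * Nat.nth Nat.Prime n) : ℝ) ≤ 8 * primeSum n :=
      mod_cast three_mul_mul_nth_prime_le hn hn'
    linarith
  · have hexp : exp (5 / 3) < 5.5 :=
      mod_cast exp_div_lt_of_pow_lt_pow (k := 5) (m := 3) (b := 5.5) (by norm_num)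
        (by norm_num) (by norm_num)
    have hn'' : (8 : ℝ) ≤ n := mod_cast hn
    calc exp (5 / 3) < 4 * log 4 := by linarith [log_two_gt_d9, log_four_eq]
      _ ≤ n / 2 * log (n / 2) := mul_log_le_mul_log (by norm_num) (by linarith)

lemma primeSum_six : primeSum 6 = 41 :=
  (primeSum_eq_sum_primesBelow (m := 17) (by decide +kernel)).trans (by decide +kernel)

lemma primeSum_seven : primeSum 7 = 58 :=
  (primeSum_eq_sum_primesBelow (m := 19) (by decide +kernel)).trans (by decide +kernel)

lemma primeSum_eight : primeSum 8 = 77 :=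
  (primeSum_eq_sum_primesBelow (m := 23) (by decide +kernel)).trans (by decide +kernel)

lemma avgNicholson_six : AvgNicholson 6 := by
  rw [AvgNicholson, avgPrime_eq_primeSum_div, avgPrime_eq_primeSum_div, primeSum_six,
    primeSum_seven]
  norm_num
  linarith [log_three_gt_d9]

lemma avgNicholson_seven : AvgNicholson 7 := by
  have hlog : log 3 ≤ log (7 / 2) := log_le_log (by norm_num) (by norm_num)
  rw [AvgNicholson, avgPrime_eq_primeSum_div, avgPrime_eq_primeSum_div, primeSum_seven,
    primeSum_eight]
  norm_num
  linarith [log_three_gt_d9]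

theorem stmt18 (n : ℕ) (hn : 6 ≤ n) :
    (avgPrime (n + 1) / avgPrime n) ^ n < ((n : ℝ) / 2) * Real.log ((n : ℝ) / 2) := by
  rcases lt_or_ge n 8 with h8 | h8
  · interval_cases n
    · exact avgNicholson_six
    · exact avgNicholson_seven
  rcases lt_or_ge n 20 with h20 | h20
  · exact avgNicholson_of_8_le_of_lt_20 h8 h20
  rcases lt_or_ge n 128 with h128 | h128
  · exact avgNicholson_of_20_le_of_lt_128 h20 h128
  · exact avgNicholson_of_128_le h128
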